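/- arXiv:q-alg/9703002 — 4 statements merged into one kernel-verified Lean document; each statement's English description precedes it below -/
import Mathlib

section
/- Let k be an algebraically closed field, G an abelian group, and χ a commutation factor on G with values in kˣ. Then there exists a bimultiplicative map σ : G × G → kˣ such that for all g, h ∈ G one has χ(g,h)·σ(g,h)·σ(h,g)⁻¹ = χ₀(g,h), where χ₀(g,h) = −1 if χ(g,g) = −1 and χ(h,h) = −1, and χ₀(g,h) = 1 otherwise. (Thus any G-color Lie algebra with commutation factor χ can be cocycle-twisted into a G-graded super-Lie algebra with commutation factor χ₀.) -/
open scoped TensorProduct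

theorem sch_decomp (M : Type*) [AddCommGroup M] [Module.Finite ℤ M] :
    ∃ (ι : Type) (_ : Fintype ι) (p : ι → M →ₗ[ℤ] M) (g : ι → M),
      (∀ x, ∑ i, p i x = x) ∧ ∀ i x, ∃ c : ℤ, p i x = c • g i := by
  classical
  obtain ⟨n, ι, _, q, _, e, ⟨f⟩⟩ := Module.equiv_free_prod_directSum (R := ℤ) (M := M)
  refine ⟨Fin n ⊕ ι, inferInstance,
    Sum.elim
      (fun i => f.symm.toLinearMap ∘ₗ LinearMap.inl ℤ _ _ ∘ₗ Finsupp.lsingle i ∘ₗ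
        Finsupp.lapply i ∘ₗ LinearMap.fst ℤ _ _ ∘ₗ f.toLinearMap)
      (fun i => f.symm.toLinearMap ∘ₗ LinearMap.inr ℤ _ _ ∘ₗ DirectSum.lof ℤ ι _ i ∘ₗ
        DirectSum.component ℤ ι _ i ∘ₗ LinearMap.snd ℤ _ _ ∘ₗ f.toLinearMap),
    Sum.elim (fun i => f.symm (Finsupp.single i 1, 0))
      (fun i => f.symm (0, DirectSum.lof ℤ ι (fun i => ℤ ⧸ Submodule.span ℤ {q i ^ e i}) i (Submodule.Quotient.mk 1))), ?_, ?_⟩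
  · intro x
    apply f.injective
    rw [map_sum, Fintype.sum_sum_type]
    have h1 : ∑ i : Fin n, Finsupp.single i ((f x).1 i) = (f x).1 :=
      Finsupp.univ_sum_single _
    have h2 : ∑ i : ι, DirectSum.lof ℤ ι (fun i => ℤ ⧸ Submodule.span ℤ {q i ^ e i}) i ((f x).2 i) = (f x).2 := by
      conv_rhs => rw [← DirectSum.sum_univ_of (f x).2]
      rfl
    apply Prod.ext
    · simp [Prod.fst_sum, h1]
    · simp [Prod.snd_sum]
      exact h2
  · rintro (i | i) x
    · refine ⟨(f x).1 i, ?_⟩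
      simp [← map_smul]
    · obtain ⟨c, hc⟩ := Submodule.Quotient.mk_surjective _ ((f x).2 i)
      refine ⟨c, ?_⟩
      have : (f x).2 i = c • (Submodule.Quotient.mk 1 : ℤ ⧸ Submodule.span ℤ {q i ^ e i}) := by
        rw [← hc, ← Submodule.Quotient.mk_smul]; simp
      simp only [Sum.elim_inr, LinearMap.comp_apply, LinearEquiv.coe_coe, LinearMap.snd_apply]
      rw [← map_smul]
      congr 1
      change ((0 : Fin n →₀ ℤ), DirectSum.lof ℤ ι (fun i => ℤ ⧸ Submodule.span ℤ {q i ^ e i}) i ((f x).2 i)) = _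
      rw [this, map_smul]
      ext1 <;> simp

theorem sch_fg {M A : Type*} [AddCommGroup M] [Module.Finite ℤ M] [AddCommGroup A]
    (B : M →ₗ[ℤ] M →ₗ[ℤ] A) (hB : ∀ x, B x x = 0) :
    ∃ s : M →ₗ[ℤ] M →ₗ[ℤ] A, ∀ x y, B x y = s x y - s y x := by
  classical
  obtain ⟨ι, _, p, g, hp, hg⟩ := sch_decomp M
  have hB' : ∀ x y, B y x = - B x y := by
    intro x y
    have := hB (x + y)
    simp [hB] at this
    exact eq_neg_of_add_eq_zero_left (by rw [← this, add_comm])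
  let o := Fintype.equivFin ι
  refine ⟨∑ i, ∑ j, if o i < o j then B.compl₁₂ (p i) (p j) else 0, fun x y => ?_⟩
  have e1 : B x y = ∑ i, ∑ j, B (p i x) (p j y) := by
    conv_lhs => rw [← hp x, ← hp y]
    simp [map_sum, LinearMap.sum_apply]
    rw [Finset.sum_comm]
  have e2 : ∀ x y, (∑ i, ∑ j, if o i < o j then B.compl₁₂ (p i) (p j) else 0) x y
      = ∑ i, ∑ j, if o i < o j then B (p i x) (p j y) else 0 := by
    intro x y
    simp only [LinearMap.sum_apply]
    refine Finset.sum_congr rfl fun i _ => Finset.sum_congr rfl fun j _ => ?_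
    split_ifs <;> simp
  rw [e1, e2, e2, Finset.sum_comm (f := fun i j => if o i < o j then B (p i y) (p j x) else 0),
    ← Finset.sum_sub_distrib]
  refine Finset.sum_congr rfl fun i _ => ?_
  rw [← Finset.sum_sub_distrib]
  refine Finset.sum_congr rfl fun j _ => ?_
  rcases lt_trichotomy (o i) (o j) with h | h | h
  · simp [h, h.not_gt]
  · obtain rfl := o.injective h
    obtain ⟨c, hc⟩ := hg i x
    obtain ⟨d, hd⟩ := hg i y
    simp [hc, hd, hB]
  · simp [h, h.not_gt, hB' (p j y) (p i x)]

theorem sch_sym {M A : Type*} [AddCommGroup M] [AddCommGroup A]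
    (B : M →ₗ[ℤ] M →ₗ[ℤ] A) (hB : ∀ x, B x x = 0) (t : M ⊗[ℤ] M)
    (ht : t - TensorProduct.comm ℤ M M t = 0) : TensorProduct.lift B t = 0 := by
  obtain ⟨P₁, P₂, hP₁, hP₂, h⟩ :=
    TensorProduct.exists_finite_submodule_of_setFinite {t} (Set.finite_singleton t)
  obtain ⟨P, hP, u, rfl⟩ : ∃ P : Submodule ℤ M, P.FG ∧ ∃ u : P ⊗[ℤ] P,
      TensorProduct.map P.subtype P.subtype u = t := by
    obtain ⟨u, hu⟩ := h rfl
    refine ⟨P₁ ⊔ P₂, (Module.Finite.iff_fg.1 hP₁).sup (Module.Finite.iff_fg.1 hP₂),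
      TensorProduct.map (Submodule.inclusion le_sup_left) (Submodule.inclusion le_sup_right) u, ?_⟩
    rw [← hu, TensorProduct.mapIncl, ← LinearMap.comp_apply, ← TensorProduct.map_comp]
    rfl
  have comm_map : ∀ (N N' : Submodule ℤ M) (f : N →ₗ[ℤ] N') (u : N ⊗[ℤ] N),
      TensorProduct.comm ℤ N' N' (TensorProduct.map f f u) =
        TensorProduct.map f f (TensorProduct.comm ℤ N N u) := by
    intro N N' f u
    exact (TensorProduct.map_comm _ _ _).symm
  obtain ⟨d, hd⟩ : ∃ d, d = u - TensorProduct.comm ℤ P P u := ⟨_, rfl⟩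
  have hd0 : TensorProduct.map P.subtype P.subtype d = 0 := by
    rw [hd, map_sub, TensorProduct.map_comm, ht]
  obtain ⟨Q, hPQ, hQ, h1⟩ := TensorProduct.eq_zero_of_fg_of_subtype_eq_zero (N := M) hP
    (t := LinearMap.lTensor P P.subtype d) (by
      rw [← LinearMap.comp_apply, LinearMap.rTensor_comp_lTensor, hd0])
  obtain ⟨Q', hPQ', hQ', h2⟩ := TensorProduct.eq_zero_of_fg_of_subtype_eq_zero (N := Q) hP
    (t := TensorProduct.comm ℤ Q P (LinearMap.rTensor P (Submodule.inclusion hPQ) d)) (by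
      rw [← LinearMap.comp_apply, LinearMap.rTensor_comp_lTensor] at h1
      rw [LinearMap.rTensor, LinearMap.rTensor, ← TensorProduct.map_comm,
        ← LinearMap.comp_apply, ← TensorProduct.map_comp, TensorProduct.map_comm, LinearEquiv.map_eq_zero_iff]
      exact h1)
  have h3 : TensorProduct.map (Submodule.inclusion (hPQ.trans le_sup_left : P ≤ Q ⊔ Q'))
      (Submodule.inclusion (hPQ.trans le_sup_left : P ≤ Q ⊔ Q')) d = 0 := by
    have := congrArg (TensorProduct.map (Submodule.inclusion (le_sup_right : Q' ≤ Q ⊔ Q'))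
      (Submodule.inclusion (le_sup_left : Q ≤ Q ⊔ Q'))) h2
    rw [LinearMap.rTensor, LinearMap.rTensor, TensorProduct.map_comm, TensorProduct.map_comm,
      map_zero, LinearEquiv.map_eq_zero_iff, ← LinearMap.comp_apply, ← LinearMap.comp_apply,
      ← TensorProduct.map_comp, ← TensorProduct.map_comp] at this
    exact this
  set R := Q ⊔ Q'
  have : Module.Finite ℤ R := Module.Finite.iff_fg.2 (hQ.sup hQ')
  obtain ⟨s, hs⟩ := sch_fg (B.compl₁₂ R.subtype R.subtype) (fun x => hB _)
  have key : ∀ v : P ⊗[ℤ] P, TensorProduct.lift B (TensorProduct.map P.subtype P.subtype v) =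
      TensorProduct.lift s (TensorProduct.map (Submodule.inclusion (hPQ.trans le_sup_left : P ≤ R))
      (Submodule.inclusion (hPQ.trans le_sup_left : P ≤ R)) (v - TensorProduct.comm ℤ P P v)) := by
    intro v
    induction v with
    | zero => simp
    | add a b ha hb =>
      rw [map_add, map_add, ha, hb, ← map_add, ← map_add]
      congr 2
      rw [map_add]; abel
    | tmul x y =>
      have := hs (Submodule.inclusion (hPQ.trans le_sup_left : P ≤ R) x)
        (Submodule.inclusion (hPQ.trans le_sup_left : P ≤ R) y)
      simpa using this
  rw [key, ← hd, h3, map_zero]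

theorem sch_alt {M A : Type*} [AddCommGroup M] [AddCommGroup A] [DivisibleBy A ℤ]
    (B : M →ₗ[ℤ] M →ₗ[ℤ] A) (hB : ∀ x, B x x = 0) :
    ∃ s : M →ₗ[ℤ] M →ₗ[ℤ] A, ∀ x y, B x y = s x y - s y x := by
  let D : M ⊗[ℤ] M →ₗ[ℤ] M ⊗[ℤ] M := LinearMap.id - (TensorProduct.comm ℤ M M).toLinearMap
  have hker : LinearMap.ker D ≤ LinearMap.ker (TensorProduct.lift B) := by
    intro t ht
    exact sch_sym B hB t ht
  obtain ⟨s, hs⟩ := (Module.Baer.of_divisible A).extension_property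
    ((LinearMap.ker D).liftQ D le_rfl)
    (LinearMap.ker_eq_bot.1 (Submodule.ker_liftQ_eq_bot _ _ _ le_rfl))
    ((LinearMap.ker D).liftQ (TensorProduct.lift B) hker)
  refine ⟨TensorProduct.curry s, fun x y => ?_⟩
  have := LinearMap.congr_fun hs (Submodule.Quotient.mk (x ⊗ₜ y))
  have h' : s (x ⊗ₜ y - y ⊗ₜ x) = B x y := this
  rw [← h', map_sub]
  rfl

theorem sch_mul {k : Type*} [Field k] [IsAlgClosed k] {G : Type*} [CommGroup G] (β : G → G → kˣ)
    (hl : ∀ a b c : G, β (a * b) c = β a c * β b c)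
    (hr : ∀ a b c : G, β a (b * c) = β a b * β a c)
    (h1 : ∀ g, β g g = 1) :
    ∃ σ : G → G → kˣ,
      (∀ a b c : G, σ (a * b) c = σ a c * σ b c) ∧
      (∀ a b c : G, σ a (b * c) = σ a b * σ a c) ∧
      (∀ g h : G, β g h = σ g h * (σ h g)⁻¹) := by
  have surj : ∀ {n : ℤ}, n ≠ 0 → Function.Surjective (fun a : Additive kˣ => n • a) := by
    intro n hn a
    have hpos : 0 < n.natAbs := Int.natAbs_pos.2 hn
    obtain ⟨z, hz⟩ := IsAlgClosed.exists_pow_nat_eq ((a.toMul : kˣ) : k) hpos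
    have hz0 : z ≠ 0 := by
      rintro rfl
      rw [zero_pow hpos.ne'] at hz
      exact a.toMul.ne_zero hz.symm
    have hu : (Units.mk0 z hz0) ^ n.natAbs = a.toMul := Units.ext (by simpa using hz)
    rcases Int.natAbs_eq n with h | h
    · refine ⟨Additive.ofMul (Units.mk0 z hz0), ?_⟩
      rw [h]
      apply Additive.toMul.injective
      generalize n.natAbs = m at hu ⊢; simpa using hu
    · refine ⟨Additive.ofMul (Units.mk0 z hz0)⁻¹, ?_⟩
      rw [h]
      apply Additive.toMul.injective
      generalize n.natAbs = m at hu ⊢; simpa using hu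
  let _ : DivisibleBy (Additive kˣ) ℤ := divisibleByOfSMulRightSurj _ _ surj
  let B : Additive G →+ Additive G →+ Additive kˣ :=
    AddMonoidHom.mk' (fun g => AddMonoidHom.mk' (fun h => Additive.ofMul (β g.toMul h.toMul))
      (fun a b => congrArg Additive.ofMul (hr _ _ _)))
      (fun a b => AddMonoidHom.ext fun c => congrArg Additive.ofMul (hl _ _ _))
  let B' : Additive G →ₗ[ℤ] Additive G →ₗ[ℤ] Additive kˣ :=
    LinearMap.mk₂ ℤ (fun g h => B g h) (by simp) (by simp) (by simp) (by simp)
  obtain ⟨s, hs⟩ := sch_alt B' (fun x => congrArg Additive.ofMul (h1 _))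
  refine ⟨fun g h => (s (Additive.ofMul g) (Additive.ofMul h)).toMul, ?_, ?_, ?_⟩
  · intro a b c; simp
  · intro a b c; simp
  · intro g h
    have := congrArg Additive.toMul (hs (Additive.ofMul g) (Additive.ofMul h))
    rw [toMul_sub, div_eq_mul_inv] at this
    exact this

open scoped Classical in
theorem scheunert_twist_to_super {k : Type*} [Field k] [IsAlgClosed k]
    {G : Type*} [CommGroup G] (χ : G → G → kˣ)
    (hχ_mul_left : ∀ a b c : G, χ (a * b) c = χ a c * χ b c)
    (hχ_mul_right : ∀ a b c : G, χ a (b * c) = χ a b * χ a c)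
    (hχ_symm : ∀ g h : G, χ g h * χ h g = 1) :
    ∃ σ : G → G → kˣ,
      (∀ a b c : G, σ (a * b) c = σ a c * σ b c) ∧
      (∀ a b c : G, σ a (b * c) = σ a b * σ a c) ∧
      (∀ g h : G, χ g h * σ g h * (σ h g)⁻¹ =
        (if χ g g = -1 ∧ χ h h = -1 then (-1 : kˣ) else 1)) := by
  have hsq : ∀ g, χ g g = 1 ∨ χ g g = -1 := by
    intro g
    have h := congrArg (Units.val) (hχ_symm g g)
    rw [Units.val_mul, Units.val_one, mul_self_eq_one_iff] at h
    exact h.imp (fun h => Units.ext h) (fun h => Units.ext (by simpa using h))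
  have hmul : ∀ a b, χ (a * b) (a * b) = χ a a * χ b b := by
    intro a b
    rw [hχ_mul_left, hχ_mul_right, hχ_mul_right]
    calc χ a a * χ a b * (χ b a * χ b b) = χ a a * χ b b * (χ a b * χ b a) := by
          rw [mul_assoc, mul_assoc, ← mul_assoc (χ a b), mul_comm (χ a b * χ b a)]
      _ = _ := by rw [hχ_symm, mul_one]
  let χ₀ : G → G → kˣ := fun g h => if χ g g = -1 ∧ χ h h = -1 then (-1 : kˣ) else 1
  have hcomm : ∀ g h, χ₀ g h = χ₀ h g := fun g h => by simp only [χ₀, and_comm]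
  have h0l : ∀ a b c : G, χ₀ (a * b) c = χ₀ a c * χ₀ b c := by
    intro a b c
    simp only [χ₀, hmul]
    by_cases h1 : (1 : kˣ) = -1
    · simp [← h1]
    · rcases hsq a with ha | ha <;> rcases hsq b with hb | hb <;> rcases hsq c with hc | hc <;>
        simp [ha, hb, hc, h1]
  have h0r : ∀ a b c : G, χ₀ a (b * c) = χ₀ a b * χ₀ a c := by
    intro a b c
    rw [hcomm, h0l, hcomm b, hcomm c]
  have h0d : ∀ g, χ₀ g g = χ g g := by
    intro g
    simp only [χ₀, and_self]
    split_ifs with h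
    · exact h.symm
    · exact ((hsq g).resolve_right h).symm
  obtain ⟨σ, hl, hr, hσ⟩ := sch_mul (fun g h => χ₀ g h * (χ g h)⁻¹)
    (fun a b c => by rw [h0l, hχ_mul_left, mul_inv, mul_mul_mul_comm])
    (fun a b c => by rw [h0r, hχ_mul_right, mul_inv, mul_mul_mul_comm])
    (fun g => by rw [h0d, mul_inv_cancel])
  refine ⟨σ, hl, hr, fun g h => ?_⟩
  rw [mul_assoc, ← hσ]
  change _ = χ₀ g h
  rw [mul_comm, inv_mul_cancel_right]
end

section
/- Let k be an algebraically closed field, G an abelian group, and χ : G × G → kˣ a bimultiplicative map with χ(g,g) = 1 for every g ∈ G. Then there exists a bimultiplicative map σ : G × G → kˣ such that χ(g,h) = σ(g,h)·σ(h,g)⁻¹ for all g, h ∈ G. -/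
open TensorProduct

/-- `M` is a finite sum of cyclic groups, phrased through endomorphisms. -/
def CycDec (M : Type*) [AddCommGroup M] : Prop :=
  ∃ (n : ℕ) (e : Fin n → M →ₗ[ℤ] M), (∀ x, ∑ i, e i x = x) ∧
    ∀ i, ∃ g : M, ∀ x, ∃ c : ℤ, e i x = c • g

lemma CycDec.of_fintype {M : Type*} [AddCommGroup M] {ι : Type*} [Fintype ι]
    (e : ι → M →ₗ[ℤ] M) (h1 : ∀ x, ∑ i, e i x = x)
    (h2 : ∀ i, ∃ g : M, ∀ x, ∃ c : ℤ, e i x = c • g) : CycDec M := by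
  refine ⟨Fintype.card ι, fun i => e ((Fintype.equivFin ι).symm i), fun x => ?_, fun i => h2 _⟩
  rw [Equiv.sum_comp (Fintype.equivFin ι).symm (fun i => e i x), h1]

lemma CycDec.of_fg (M : Type*) [AddCommGroup M] [Module.Finite ℤ M] : CycDec M := by
  classical
  have : AddGroup.FG M := Module.Finite.iff_addGroup_fg.mp inferInstance
  obtain ⟨n, ι, _, p, -, e, ⟨f⟩⟩ := AddCommGroup.equiv_free_prod_directSum_zmod M
  let F : M ≃ₗ[ℤ] (Fin n →₀ ℤ) × (DirectSum ι fun i => ZMod (p i ^ e i)) :=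
    f.toIntLinearEquiv
  let eL : Fin n → (Fin n →₀ ℤ) →ₗ[ℤ] (Fin n →₀ ℤ) := fun i =>
    Finsupp.lsingle i ∘ₗ Finsupp.lapply i
  let eR : ι → (DirectSum ι fun i => ZMod (p i ^ e i)) →ₗ[ℤ]
      (DirectSum ι fun i => ZMod (p i ^ e i)) := fun i =>
    DirectSum.lof ℤ ι (fun i => ZMod (p i ^ e i)) i ∘ₗ DirectSum.component ℤ ι _ i
  have hL : ∀ x, ∑ i, eL i x = x := by
    intro x
    simp [eL, Finsupp.univ_sum_single]
  have hR : ∀ x, ∑ i, eR i x = x := by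
    intro x
    exact DirectSum.sum_univ_of x
  apply CycDec.of_fintype (ι := Fin n ⊕ ι)
    (Sum.elim
      (fun i => F.symm.toLinearMap ∘ₗ LinearMap.inl ℤ _ _ ∘ₗ eL i ∘ₗ LinearMap.fst ℤ _ _ ∘ₗ F.toLinearMap)
      (fun i => F.symm.toLinearMap ∘ₗ LinearMap.inr ℤ _ _ ∘ₗ eR i ∘ₗ LinearMap.snd ℤ _ _ ∘ₗ F.toLinearMap))
  · intro x
    rw [Fintype.sum_sum_type]
    simp only [Sum.elim_inl, Sum.elim_inr, LinearMap.comp_apply, LinearEquiv.coe_coe]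
    rw [← map_sum, ← map_sum, ← map_sum, ← map_sum, hL, hR, ← map_add]
    rw [LinearEquiv.symm_apply_eq]
    ext <;> simp
  · rintro (i | i)
    · refine ⟨F.symm (LinearMap.inl ℤ _ _ (Finsupp.single i 1)), fun x => ⟨(F x).1 i, ?_⟩⟩
      simp only [Sum.elim_inl, LinearMap.comp_apply, LinearEquiv.coe_coe]
      rw [← map_smul, ← map_smul]
      simp [eL]
    · refine ⟨F.symm (LinearMap.inr ℤ _ _ (DirectSum.lof ℤ ι (fun i => ZMod (p i ^ e i)) i 1)),
        fun x => ?_⟩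
      obtain ⟨c, hc⟩ := ZMod.intCast_surjective ((F x).2 i)
      refine ⟨c, ?_⟩
      simp only [Sum.elim_inr, LinearMap.comp_apply, LinearEquiv.coe_coe]
      rw [← map_smul, ← map_smul, ← map_smul]
      have : c • (1 : ZMod (p i ^ e i)) = (F x).2 i := by rw [← hc]; simp
      rw [this]
      rfl

lemma CycDec.exists_sigma {M D : Type*} [AddCommGroup M] [AddCommGroup D] (hM : CycDec M)
    (χ : M →ₗ[ℤ] M →ₗ[ℤ] D) (hχ : ∀ x, χ x x = 0) :
    ∃ σ : M →ₗ[ℤ] M →ₗ[ℤ] D, ∀ x y, χ x y = σ x y - σ y x := by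
  classical
  obtain ⟨n, e, h1, h2⟩ := hM
  have hd : ∀ i x y, χ (e i x) (e i y) = 0 := by
    intro i x y
    obtain ⟨g, hg⟩ := h2 i
    obtain ⟨c, hc⟩ := hg x
    obtain ⟨d, hd⟩ := hg y
    simp [hc, hd, hχ]
  have hanti : ∀ x y, χ x y = - χ y x := by
    intro x y
    have := hχ (x + y)
    simp only [map_add, LinearMap.add_apply, hχ] at this
    rw [eq_neg_iff_add_eq_zero]
    simpa [add_comm] using this
  refine ⟨∑ i, ∑ j, if i < j then χ.compl₁₂ (e i) (e j) else 0, fun x y => ?_⟩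
  have key : ∀ x y, (∑ i, ∑ j, if i < j then χ.compl₁₂ (e i) (e j) else 0 :
      M →ₗ[ℤ] M →ₗ[ℤ] D) x y = ∑ i, ∑ j, if i < j then χ (e i x) (e j y) else 0 := by
    intro x y
    simp only [LinearMap.sum_apply]
    refine Finset.sum_congr rfl fun i _ => Finset.sum_congr rfl fun j _ => ?_
    split_ifs <;> simp
  rw [key, key, Finset.sum_comm (f := fun i j => if i < j then χ (e i y) (e j x) else 0)]
  conv_lhs => rw [← h1 x, ← h1 y]
  simp only [map_sum, LinearMap.sum_apply]
  rw [Finset.sum_comm]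
  simp only [← Finset.sum_sub_distrib]
  refine Finset.sum_congr rfl fun i _ => Finset.sum_congr rfl fun j _ => ?_
  rcases lt_trichotomy i j with h | h | h
  · simp [h, h.not_gt]
  · subst h; simp [hd]
  · simp [h, h.not_gt, hanti (e i x)]

lemma exists_fg_map_eq_zero {M : Type*} [AddCommGroup M] (P : Submodule ℤ M) (hP : P.FG)
    (s : P ⊗[ℤ] P) (hs : TensorProduct.map P.subtype P.subtype s = 0) :
    ∃ (Q : Submodule ℤ M) (h : P ≤ Q), Q.FG ∧
      TensorProduct.map (Submodule.inclusion h) (Submodule.inclusion h) s = 0 := by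
  have h1 : LinearMap.rTensor M P.subtype (LinearMap.lTensor P P.subtype s) = 0 := by
    rw [← LinearMap.comp_apply, LinearMap.rTensor_comp_lTensor]; exact hs
  obtain ⟨Q1, hQ1, hQ1fg, e1⟩ := TensorProduct.eq_zero_of_fg_of_subtype_eq_zero hP h1
  have h2 : LinearMap.rTensor Q1 P.subtype
      (TensorProduct.comm ℤ Q1 P (LinearMap.rTensor P (Submodule.inclusion hQ1) s)) = 0 := by
    have hc : LinearMap.rTensor Q1 P.subtype ∘ₗ (TensorProduct.comm ℤ Q1 P).toLinearMap ∘ₗ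
        LinearMap.rTensor P (Submodule.inclusion hQ1) =
        (TensorProduct.comm ℤ Q1 M).toLinearMap ∘ₗ
        LinearMap.rTensor M (Submodule.inclusion hQ1) ∘ₗ LinearMap.lTensor P P.subtype := by
      ext x y
      simp
    have := LinearMap.congr_fun hc s
    simp only [LinearMap.comp_apply, LinearEquiv.coe_coe] at this
    rw [this, e1, map_zero]
  obtain ⟨Q2, hQ2, hQ2fg, e2⟩ := TensorProduct.eq_zero_of_fg_of_subtype_eq_zero hP h2
  refine ⟨Q1 ⊔ Q2, hQ1.trans le_sup_left, hQ1fg.sup hQ2fg, ?_⟩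
  have hc : TensorProduct.map (Submodule.inclusion (hQ1.trans le_sup_left))
        (Submodule.inclusion (hQ1.trans le_sup_left)) =
      TensorProduct.map (Submodule.inclusion (le_sup_left : Q1 ≤ Q1 ⊔ Q2))
        (Submodule.inclusion (le_sup_right : Q2 ≤ Q1 ⊔ Q2)) ∘ₗ
      (TensorProduct.comm ℤ Q2 Q1).toLinearMap ∘ₗ
      LinearMap.rTensor Q1 (Submodule.inclusion hQ2) ∘ₗ
      (TensorProduct.comm ℤ Q1 P).toLinearMap ∘ₗ
      LinearMap.rTensor P (Submodule.inclusion hQ1) := by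
    ext x y
    rfl
  have := LinearMap.congr_fun hc s
  simp only [LinearMap.comp_apply, LinearEquiv.coe_coe] at this
  rw [this, e2, map_zero, map_zero]

lemma sym_vanish {M D : Type*} [AddCommGroup M] [AddCommGroup D] 
    (χ : M →ₗ[ℤ] M →ₗ[ℤ] D) (hχ : ∀ x, χ x x = 0) (t : M ⊗[ℤ] M)
    (ht : t - TensorProduct.comm ℤ M M t = 0) : TensorProduct.lift χ t = 0 := by
  obtain ⟨P1, P2, hP1, hP2, hr⟩ := TensorProduct.exists_finite_submodule_of_setFinite {t} (by simp)
  rw [Module.Finite.iff_fg] at hP1 hP2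
  have hr2 := (TensorProduct.range_mapIncl_mono (le_sup_left : P1 ≤ P1 ⊔ P2)
    (le_sup_right : P2 ≤ P1 ⊔ P2)) (hr rfl)
  have hP := hP1.sup hP2
  generalize P1 ⊔ P2 = P at hr2 hP
  obtain ⟨s, rfl⟩ := hr2
  have hcomm : ∀ (Q : Submodule ℤ M) (h : P ≤ Q) (s : P ⊗[ℤ] P),
     TensorProduct.map (Submodule.inclusion h) (Submodule.inclusion h) (TensorProduct.comm ℤ P P s)
      = TensorProduct.comm ℤ Q Q (TensorProduct.map (Submodule.inclusion h) (Submodule.inclusion h) s) := by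
    intro Q h s
    rw [TensorProduct.map_comm]
  obtain ⟨Q, hPQ, hQ, h0⟩ := exists_fg_map_eq_zero P hP (s - TensorProduct.comm ℤ P P s) (by
    rw [map_sub, TensorProduct.map_comm]; exact ht)
  have := Module.Finite.iff_fg.mpr hQ
  obtain ⟨σ, hσ⟩ := (CycDec.of_fg Q).exists_sigma (χ.compl₁₂ Q.subtype Q.subtype) (fun x => hχ x)
  rw [map_sub, hcomm] at h0
  have e1 : TensorProduct.lift χ ∘ₗ TensorProduct.mapIncl P P
      = (TensorProduct.lift σ - TensorProduct.lift σ ∘ₗ (TensorProduct.comm ℤ Q Q).toLinearMap) ∘ₗ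
        TensorProduct.map (Submodule.inclusion hPQ) (Submodule.inclusion hPQ) := by
    ext x y
    simpa using hσ (Submodule.inclusion hPQ x) (Submodule.inclusion hPQ y)
  have := LinearMap.congr_fun e1 s
  simp only [LinearMap.comp_apply, LinearMap.sub_apply, LinearEquiv.coe_coe] at this
  rw [this, ← map_sub, h0, map_zero]

lemma main_add {M D : Type*} [AddCommGroup M] [AddCommGroup D] (hD : Module.Baer ℤ D)
    (χ : M →ₗ[ℤ] M →ₗ[ℤ] D) (hχ : ∀ x, χ x x = 0) :
    ∃ σ : M →ₗ[ℤ] M →ₗ[ℤ] D, ∀ x y, χ x y = σ x y - σ y x := by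
  let A : M ⊗[ℤ] M →ₗ[ℤ] M ⊗[ℤ] M := LinearMap.id - (TensorProduct.comm ℤ M M).toLinearMap
  have hk : LinearMap.ker A ≤ LinearMap.ker (TensorProduct.lift χ) := fun t ht =>
    sym_vanish χ hχ t ht
  obtain ⟨h, hh⟩ := hD.extension_property ((LinearMap.ker A).liftQ A le_rfl)
    (LinearMap.ker_eq_bot.mp (Submodule.ker_liftQ_eq_bot _ _ _ le_rfl))
    ((LinearMap.ker A).liftQ (TensorProduct.lift χ) hk)
  refine ⟨TensorProduct.curry h, fun x y => ?_⟩
  have := LinearMap.congr_fun hh (Submodule.Quotient.mk (x ⊗ₜ y))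
  have h2 : h (A (x ⊗ₜ y)) = χ x y := this
  rw [← h2]
  have h3 : A (x ⊗ₜ y) = x ⊗ₜ y - y ⊗ₜ x := rfl
  rw [h3, map_sub]
  rfl

lemma baer_units (k : Type*) [Field k] [IsAlgClosed k] : Module.Baer ℤ (Additive kˣ) := by
  let : DivisibleBy (Additive kˣ) ℕ := by
    refine divisibleByOfSMulRightSurj _ _ ?_
    intro n hn a
    obtain ⟨z, hz⟩ := IsAlgClosed.exists_pow_nat_eq (a.toMul : k) (Nat.pos_of_ne_zero hn)
    have hz0 : z ≠ 0 := by
      rintro rfl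
      rw [zero_pow hn] at hz
      exact a.toMul.ne_zero hz.symm
    exact ⟨Additive.ofMul (Units.mk0 z hz0), by
      apply Additive.toMul.injective
      ext
      simpa using hz⟩
  let : DivisibleBy (Additive kˣ) ℤ := AddGroup.divisibleByIntOfDivisibleByNat _
  exact Module.Baer.of_divisible _

theorem exists_bimultiplicative_antisymmetrization {k : Type*} [Field k] [IsAlgClosed k]
    {G : Type*} [CommGroup G] (χ : G → G → kˣ)
    (hχ_mul_left : ∀ a b c : G, χ (a * b) c = χ a c * χ b c)
    (hχ_mul_right : ∀ a b c : G, χ a (b * c) = χ a b * χ a c)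
    (hχ_diag : ∀ g : G, χ g g = 1) :
    ∃ σ : G → G → kˣ,
      (∀ a b c : G, σ (a * b) c = σ a c * σ b c) ∧
      (∀ a b c : G, σ a (b * c) = σ a b * σ a c) ∧
      (∀ g h : G, χ g h = σ g h * (σ h g)⁻¹) := by
  let X1 : Additive G → (Additive G →ₗ[ℤ] Additive kˣ) := fun x =>
    (AddMonoidHom.mk' (fun y : Additive G => Additive.ofMul (χ x.toMul y.toMul))
      (fun a b => congrArg Additive.ofMul (hχ_mul_right _ _ _))).toIntLinearMap
  let X : Additive G →ₗ[ℤ] Additive G →ₗ[ℤ] Additive kˣ :=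
    (AddMonoidHom.mk' X1 (fun a b => LinearMap.ext fun c =>
      congrArg Additive.ofMul (hχ_mul_left _ _ _))).toIntLinearMap
  obtain ⟨σ, hσ⟩ := main_add (baer_units k) X
    (fun x => congrArg Additive.ofMul (hχ_diag x.toMul))
  refine ⟨fun a b => (σ (Additive.ofMul a) (Additive.ofMul b)).toMul, fun a b c => ?_,
    fun a b c => ?_, fun g h => ?_⟩
  · simp
  · simp
  · have := congrArg Additive.toMul (hσ (Additive.ofMul g) (Additive.ofMul h))
    rw [toMul_sub, div_eq_mul_inv] at this
    exact this
end

section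
/- Let G be an abelian group, k a field, and χ a commutation factor on G with values in kˣ. Define χ₀ : G × G → kˣ by χ₀(g,h) = −1 if χ(g,g) = −1 and χ(h,h) = −1, and χ₀(g,h) = 1 otherwise. Then the pointwise product χ·χ₀ is a commutation factor on G satisfying (χ·χ₀)(g,g) = 1 for all g ∈ G. -/
/- The pointwise product `χ * χ₀` of a commutation factor `χ` with its associated
super bicharacter `χ₀` is a commutation factor whose diagonal is identically 1. -/
open scoped Classical in
theorem mul_super_bicharacter_commutation_factor {k : Type*} [Field k]
    {G : Type*} [CommGroup G] (χ : G → G → kˣ)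
    (hχ_mul_left : ∀ a b c : G, χ (a * b) c = χ a c * χ b c)
    (hχ_mul_right : ∀ a b c : G, χ a (b * c) = χ a b * χ a c)
    (hχ_symm : ∀ g h : G, χ g h * χ h g = 1) :
    ∀ χ₀ : G → G → kˣ,
      (χ₀ = fun g h => if χ g g = -1 ∧ χ h h = -1 then (-1 : kˣ) else 1) →
      (∀ a b c : G, (χ (a * b) c * χ₀ (a * b) c) =
          (χ a c * χ₀ a c) * (χ b c * χ₀ b c)) ∧
      (∀ a b c : G, (χ a (b * c) * χ₀ a (b * c)) =
          (χ a b * χ₀ a b) * (χ a c * χ₀ a c)) ∧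
      (∀ g h : G, (χ g h * χ₀ g h) * (χ h g * χ₀ h g) = 1) ∧
      (∀ g : G, χ g g * χ₀ g g = 1) := by
  have hd : ∀ a : G, χ a a = 1 ∨ χ a a = -1 := by
    intro a
    have h := hχ_symm a a
    have h2 : ((χ a a : kˣ) : k) * (χ a a : kˣ) = 1 := by
      rw [← Units.val_mul, h, Units.val_one]
    rcases mul_self_eq_one_iff.mp h2 with h3 | h3
    · left; exact Units.ext (by simpa using h3)
    · right; exact Units.ext (by simpa using h3)
  have hm : ∀ a b : G, χ (a * b) (a * b) = χ a a * χ b b := by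
    intro a b
    rw [hχ_mul_left, hχ_mul_right, hχ_mul_right]
    calc χ a a * χ a b * (χ b a * χ b b) = χ a a * χ b b * (χ a b * χ b a) := by
          simp only [mul_comm, mul_left_comm, mul_assoc]
      _ = _ := by rw [hχ_symm, mul_one]
  intro χ₀ h₀
  have hs : ∀ g h : G, χ₀ g h = χ₀ h g := by
    intro g h; simp only [h₀, and_comm]
  have hl : ∀ a b c : G, χ₀ (a * b) c = χ₀ a c * χ₀ b c := by
    intro a b c
    simp only [h₀, hm]
    by_cases e : (1 : kˣ) = -1
    · simp [← e]
    · rcases hd a with ha | ha <;> rcases hd b with hb | hb <;> rcases hd c with hc | hc <;>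
        simp [ha, hb, hc, e]
  have hq : ∀ g h : G, χ₀ g h * χ₀ g h = 1 := by
    intro g h
    simp only [h₀]
    split_ifs <;> simp
  refine ⟨?_, ?_, ?_, ?_⟩
  · intro a b c
    rw [hl, hχ_mul_left, mul_mul_mul_comm]
  · intro a b c
    rw [hs a (b * c), hl, hχ_mul_right, hs b a, hs c a, mul_mul_mul_comm]
  · intro g h
    rw [mul_mul_mul_comm, hχ_symm, hs h g, hq, mul_one]
  · intro g
    by_cases e : (1 : kˣ) = -1
    · rcases hd g with hg | hg <;> simp [h₀, hg, ← e]
    · rcases hd g with hg | hg <;> simp [h₀, hg, e]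
end

section
/- Let G be an abelian group, k a field, and χ : G × G → kˣ a bimultiplicative map with χ(g,g) = 1 for all g ∈ G. Let K be a subgroup of G and σ : K × K → kˣ a bimultiplicative map with χ(g,h) = σ(g,h)·σ(h,g)⁻¹ for all g, h ∈ K. Let t ∈ G be an element such that the cyclic subgroup ⟨t⟩ intersects K trivially (⟨t⟩ ∩ K = {e}). Then there exists a bimultiplicative map σ' on the subgroup generated by K and t which restricts to σ on K and satisfies χ(g,h) = σ'(g,h)·σ'(h,g)⁻¹ for all g, h in that subgroup. -/
/- Extension step in Scheunert's theorem, trivial-intersection case: if a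
bimultiplicative `σ` with `χ g h = σ g h * (σ h g)⁻¹` is defined on a subgroup `K`
and `⟨t⟩ ∩ K = {e}`, then `σ` extends to the subgroup generated by `K` and `t`. -/
theorem extend_cocycle_trivial_intersection {k : Type*} [Field k]
    {G : Type*} [CommGroup G] (χ : G → G → kˣ)
    (hχ_mul_left : ∀ a b c : G, χ (a * b) c = χ a c * χ b c)
    (hχ_mul_right : ∀ a b c : G, χ a (b * c) = χ a b * χ a c)
    (hχ_diag : ∀ g : G, χ g g = 1)
    (K : Subgroup G) (σ : K → K → kˣ)
    (hσ_mul_left : ∀ a b c : K, σ (a * b) c = σ a c * σ b c)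
    (hσ_mul_right : ∀ a b c : K, σ a (b * c) = σ a b * σ a c)
    (hσχ : ∀ g h : K, χ (g : G) (h : G) = σ g h * (σ h g)⁻¹)
    (t : G) (ht : Subgroup.zpowers t ⊓ K = ⊥) :
    ∃ σ' : (K ⊔ Subgroup.zpowers t : Subgroup G) →
           (K ⊔ Subgroup.zpowers t : Subgroup G) → kˣ,
      (∀ a b c, σ' (a * b) c = σ' a c * σ' b c) ∧
      (∀ a b c, σ' a (b * c) = σ' a b * σ' a c) ∧
      (∀ (g h : G) (hg : g ∈ K) (hh : h ∈ K),
        σ' ⟨g, (le_sup_left : K ≤ K ⊔ Subgroup.zpowers t) hg⟩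
           ⟨h, (le_sup_left : K ≤ K ⊔ Subgroup.zpowers t) hh⟩ = σ ⟨g, hg⟩ ⟨h, hh⟩) ∧
      (∀ g h : (K ⊔ Subgroup.zpowers t : Subgroup G),
        χ (g : G) (h : G) = σ' g h * (σ' h g)⁻¹) := by
  have hdec : ∀ x : (K ⊔ Subgroup.zpowers t : Subgroup G),
      ∃ p : K × Subgroup.zpowers t, (p.1 : G) * (p.2 : G) = (x : G) := by
    intro x
    obtain ⟨a, ha, b, hb, hab⟩ := Subgroup.mem_sup.1 x.2
    exact ⟨(⟨a, ha⟩, ⟨b, hb⟩), hab⟩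
  choose p hp using hdec
  -- uniqueness of the decomposition
  have huniq : ∀ (a b : K) (u v : Subgroup.zpowers t),
      (a : G) * u = b * v → a = b ∧ u = v := by
    intro a b u v h
    have h1 : (b : G)⁻¹ * a = v * (u : G)⁻¹ := by
      rw [inv_mul_eq_iff_eq_mul, ← mul_assoc, ← h, mul_inv_cancel_right]
    have h2 : (b : G)⁻¹ * a ∈ Subgroup.zpowers t ⊓ K := by
      refine ⟨?_, K.mul_mem (K.inv_mem b.2) a.2⟩
      rw [h1]
      exact Subgroup.mul_mem _ v.2 (Subgroup.inv_mem _ u.2)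
    rw [ht, Subgroup.mem_bot] at h2
    have h3 := h2
    rw [h1] at h3
    exact ⟨Subtype.ext (inv_mul_eq_one.1 h2).symm, Subtype.ext (mul_inv_eq_one.1 h3).symm⟩
  have hmul : ∀ x y, (p (x * y)).1 = (p x).1 * (p y).1 ∧ (p (x * y)).2 = (p x).2 * (p y).2 := by
    intro x y
    apply huniq
    rw [hp]
    push_cast
    rw [← hp x, ← hp y, mul_mul_mul_comm]
  have hK : ∀ (g : G) (hg : g ∈ K),
      (p ⟨g, (le_sup_left : K ≤ K ⊔ Subgroup.zpowers t) hg⟩).1 = ⟨g, hg⟩ ∧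
      (p ⟨g, (le_sup_left : K ≤ K ⊔ Subgroup.zpowers t) hg⟩).2 = 1 := by
    intro g hg
    apply huniq
    rw [hp]
    simp
  have hone : ∀ g, χ g 1 = 1 := by
    intro g
    have := hχ_mul_right g 1 1
    simpa using this
  have hskew : ∀ a b, χ a b * χ b a = 1 := by
    intro a b
    have := hχ_diag (a * b)
    rwa [hχ_mul_left, hχ_mul_right, hχ_mul_right, hχ_diag, hχ_diag, one_mul, mul_one] at this
  have htt : ∀ u v : Subgroup.zpowers t, χ (u : G) (v : G) = 1 := by
    have hr : ∀ (g : G), χ g t = 1 → ∀ n : ℤ, χ g (t ^ n) = 1 := by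
      intro g hg n
      have := map_zpow (MonoidHom.mk' (χ g) (hχ_mul_right g)) t n
      simpa [hg] using this
    rintro ⟨_, m, rfl⟩ ⟨_, n, rfl⟩
    apply hr
    have h1 := hskew (t ^ m) t
    rwa [hr t (hχ_diag t) m, mul_one] at h1
  refine ⟨fun x y => σ (p x).1 (p y).1 * χ ((p x).1 : G) ((p y).2 : G), ?_, ?_, ?_, ?_⟩
  · intro a b c
    simp only [(hmul a b).1, Subgroup.coe_mul, hσ_mul_left, hχ_mul_left]
    exact mul_mul_mul_comm _ _ _ _
  · intro a b c
    simp only [(hmul b c).1, (hmul b c).2, Subgroup.coe_mul, hσ_mul_right, hχ_mul_right]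
    exact mul_mul_mul_comm _ _ _ _
  · intro g h hg hh
    simp only [(hK g hg).1, (hK h hh).1, (hK h hh).2, Subgroup.coe_one, hone, mul_one]
  · intro g h
    have e := eq_inv_of_mul_eq_one_left (hskew ((p g).2 : G) ((p h).1 : G))
    rw [← hp g, ← hp h, hχ_mul_left, hχ_mul_right, hχ_mul_right, htt, hσχ, e, mul_one, mul_inv]
    simp only [mul_comm, mul_left_comm, mul_assoc]
end
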